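/- arXiv:1604.03345 — 3 statements merged into one kernel-verified Lean document; each statement's English description precedes it below -/
import Mathlib

section
/- Fix a real h > 0. With the explicit functions of θ > 0 defined in the context, the quantity A₂(θ) = hθ/6 − (σ₁²/2)·h·θ³·(−α/3 − β/2 + a)² − (σ₂²/2)·h·θ³·(b − γ/2 − (θ²·α·γ·σ₁²/2)·(−α/3 − β/2 + a))² − (1/2)·h·θ³·c² converges to h/2 as θ → +∞. -/
open Real Filter

/-- `Var(G₁)` as an explicit function of `θ`. -/
noncomputable def V1 (θ : ℝ) : ℝ := (1 - Real.exp (-2 * θ)) / (2 * θ)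

/-- `Var(G₂)` as an explicit function of `θ`. -/
noncomputable def V2 (θ : ℝ) : ℝ :=
  (1 + 1 / θ) ^ 2 * (1 - Real.exp (-2 * θ)) / (2 * θ) + 1 / θ ^ 2
    - (2 / θ ^ 2 + 2 / θ ^ 3) * (1 - Real.exp (-θ))

/-- `Var(G₃)` as an explicit function of `θ`. -/
noncomputable def V3 (θ : ℝ) : ℝ :=
  (1 + 2 / θ + 2 / θ ^ 2) ^ 2 * (1 - Real.exp (-2 * θ)) / (2 * θ)
    + (2 / θ + 2 / θ ^ 2) ^ 3 * θ / 6 - 8 / (6 * θ ^ 5)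
    - (4 / θ ^ 2) * (1 + 2 / θ + 2 / θ ^ 2)

/-- `Cov(G₁,G₂)` as an explicit function of `θ`. -/
noncomputable def C12 (θ : ℝ) : ℝ :=
  (1 / (2 * θ) + 1 / (2 * θ ^ 2)) * (1 - Real.exp (-2 * θ)) + (Real.exp (-θ) - 1) / θ ^ 2

/-- `Cov(G₁,G₃)` as an explicit function of `θ`. -/
noncomputable def C13 (θ : ℝ) : ℝ :=
  (1 / (2 * θ) + 1 / θ ^ 2 + 1 / θ ^ 3) * (1 - Real.exp (-2 * θ)) - 2 / θ ^ 2

/-- `Cov(G₂,G₃)` as an explicit function of `θ`. -/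
noncomputable def C23 (θ : ℝ) : ℝ :=
  (1 + 1 / θ) * (1 / (2 * θ) + 1 / θ ^ 2 + 1 / θ ^ 3) * (1 - Real.exp (-2 * θ))
    - (1 / θ ^ 2 + 2 / θ ^ 3 + 2 / θ ^ 4) * (1 - Real.exp (-θ)) - 1 / θ ^ 2

noncomputable def alphaC (θ : ℝ) : ℝ := Real.sqrt (V1 θ)

noncomputable def betaC (θ : ℝ) : ℝ := C13 θ / alphaC θ

noncomputable def gammaC (θ : ℝ) : ℝ := Real.sqrt (V3 θ - betaC θ ^ 2)

noncomputable def aC (θ : ℝ) : ℝ := C12 θ / alphaC θ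

noncomputable def bC (θ : ℝ) : ℝ := (C23 θ - aC θ * betaC θ) / gammaC θ

noncomputable def c2C (θ : ℝ) : ℝ := V2 θ - aC θ ^ 2 - bC θ ^ 2

noncomputable def sigma1sq (θ : ℝ) : ℝ :=
  (2 * (-(θ ^ 2 / 3 + θ / 2) * alphaC θ ^ 2 + θ ^ 2 * alphaC θ * betaC θ / 2 + 1 / 2))⁻¹

noncomputable def sigma2sq (θ : ℝ) : ℝ :=
  (2 * (-(sigma1sq θ * θ ^ 4 * alphaC θ ^ 2 * gammaC θ ^ 2 / 8) + 1 / 2))⁻¹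

/-! Up to errors decaying faster than every power of `θ⁻¹`, each of the six covariances is a Laurent
polynomial in `θ`, because `e^{-θ}` is negligible. The weights `σ₁²`, `σ₂²` come from completing the
square twice in a binary quadratic form, so they combine into the inverse of that form; the square
roots `α` and `γ` then disappear, and `A₂` becomes a rational function of the covariances. Inserting
the Laurent polynomials, everything cancels down to `A₂(θ) = h (1/2 - 1/(2θ))`, up to a
superpolynomially small error. -/

open Asymptotics Topology

section MainPart

variable {α 𝕜 : Type*} [TopologicalSpace 𝕜]

/-- Functions preserving superpolynomial decay under multiplication. They serve as the functions of
moderate growth; compared with an explicit growth bound, this form makes closure under sums and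
products immediate. -/
def IsDecayMultiplier [CommSemiring 𝕜] (l : Filter α) (k f : α → 𝕜) : Prop :=
  ∀ ⦃e : α → 𝕜⦄, SuperpolynomialDecay l k e → SuperpolynomialDecay l k fun x => f x * e x

/-- `g` is a main part of `f`: the two agree up to a superpolynomially decaying error. Requiring `g`
to be a decay multiplier makes the relation compatible with products. -/
structure HasMainPart [CommRing 𝕜] (l : Filter α) (k f g : α → 𝕜) : Prop where
  isDecayMultiplier : IsDecayMultiplier l k g
  decay : SuperpolynomialDecay l k fun x => f x - g x

variable {l : Filter α}

section CommSemiring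

variable [CommSemiring 𝕜] {k f g : α → 𝕜}

theorem IsDecayMultiplier.param : IsDecayMultiplier l k k := fun _ he => he.param_mul

theorem IsDecayMultiplier.mul (hf : IsDecayMultiplier l k f) (hg : IsDecayMultiplier l k g) :
    IsDecayMultiplier l k fun x => f x * g x := fun _ he =>
  (hf (hg he)).congr fun _ => (mul_assoc _ _ _).symm

theorem IsDecayMultiplier.congr' (hf : IsDecayMultiplier l k f) (hfg : f =ᶠ[l] g) :
    IsDecayMultiplier l k g := fun _ he =>
  (hf he).congr' (hfg.mul EventuallyEq.rfl)

theorem IsDecayMultiplier.add [ContinuousAdd 𝕜] (hf : IsDecayMultiplier l k f)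
    (hg : IsDecayMultiplier l k g) : IsDecayMultiplier l k fun x => f x + g x := fun _ he =>
  ((hf he).add (hg he)).congr fun _ => (add_mul _ _ _).symm

theorem IsDecayMultiplier.of_tendsto [ContinuousMul 𝕜] {c : 𝕜} (hf : Tendsto f l (𝓝 c)) :
    IsDecayMultiplier l k f := fun e he n => by
  simpa only [mul_zero, mul_left_comm] using hf.mul (he n)

theorem IsDecayMultiplier.const [ContinuousMul 𝕜] (c : 𝕜) : IsDecayMultiplier l k fun _ => c :=
  .of_tendsto tendsto_const_nhds

theorem tendsto_zero_of_superpolynomialDecay (hf : SuperpolynomialDecay l k f) :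
    Tendsto f l (𝓝 0) := by
  simpa only [pow_zero, one_mul] using hf 0

end CommSemiring

theorem IsDecayMultiplier.inv_of_tendsto_mul [Field 𝕜] [ContinuousMul 𝕜] [ContinuousInv₀ 𝕜]
    [T1Space 𝕜] {k f u : α → 𝕜} {c : 𝕜} (hu : IsDecayMultiplier l k u)
    (huf : Tendsto (fun x => u x * f x) l (𝓝 c)) (hc : c ≠ 0) :
    IsDecayMultiplier l k fun x => (f x)⁻¹ := by
  refine (hu.mul (.of_tendsto (huf.inv₀ hc))).congr' ?_
  filter_upwards [huf.eventually_ne hc] with x hx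
  have hu0 : u x ≠ 0 := left_ne_zero_of_mul hx
  rw [mul_inv, mul_inv_cancel_left₀ hu0]

namespace HasMainPart

section CommRing

variable [CommRing 𝕜] {k f g f' g' : α → 𝕜}

theorem refl (hf : IsDecayMultiplier l k f) : HasMainPart l k f f :=
  ⟨hf, (superpolynomialDecay_zero l k).congr fun _ => (sub_self _).symm⟩

theorem param : HasMainPart l k k k := refl .param

theorem zero_of_decay [ContinuousMul 𝕜] (hf : SuperpolynomialDecay l k f) :
    HasMainPart l k f fun _ => 0 :=
  ⟨.const 0, hf.congr fun _ => (sub_zero _).symm⟩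

theorem const [ContinuousMul 𝕜] (c : 𝕜) : HasMainPart l k (fun _ => c) fun _ => c :=
  refl (.const c)

theorem congr' (hf : HasMainPart l k f g) (hff' : f =ᶠ[l] f') (hgg' : g =ᶠ[l] g') :
    HasMainPart l k f' g' :=
  ⟨hf.isDecayMultiplier.congr' hgg', hf.decay.congr' (hff'.sub hgg')⟩

theorem tendsto [ContinuousAdd 𝕜] {c : 𝕜} (hf : HasMainPart l k f g) (hg : Tendsto g l (𝓝 c)) :
    Tendsto f l (𝓝 c) := by
  simpa using (tendsto_zero_of_superpolynomialDecay hf.decay).add hg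

variable [IsTopologicalRing 𝕜]

theorem add (hf : HasMainPart l k f g) (hf' : HasMainPart l k f' g') :
    HasMainPart l k (fun x => f x + f' x) fun x => g x + g' x :=
  ⟨hf.isDecayMultiplier.add hf'.isDecayMultiplier,
    (hf.decay.add hf'.decay).congr fun x => by simp only [Pi.add_apply]; ring⟩

theorem mul (hf : HasMainPart l k f g) (hf' : HasMainPart l k f' g') :
    HasMainPart l k (fun x => f x * f' x) fun x => g x * g' x :=
  ⟨hf.isDecayMultiplier.mul hf'.isDecayMultiplier,
    (((hf.decay.mul hf'.decay).add (hf.isDecayMultiplier hf'.decay)).add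
      (hf'.isDecayMultiplier hf.decay)).congr fun x => by
        simp only [Pi.add_apply, Pi.mul_apply]; ring⟩

theorem neg (hf : HasMainPart l k f g) : HasMainPart l k (fun x => -f x) fun x => -g x := by
  simpa only [neg_one_mul] using (const (-1)).mul hf

theorem sub (hf : HasMainPart l k f g) (hf' : HasMainPart l k f' g') :
    HasMainPart l k (fun x => f x - f' x) fun x => g x - g' x := by
  simpa only [sub_eq_add_neg] using hf.add hf'.neg

theorem pow (hf : HasMainPart l k f g) (n : ℕ) :
    HasMainPart l k (fun x => f x ^ n) fun x => g x ^ n := by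
  induction n with
  | zero => simpa only [pow_zero] using const 1
  | succ n ih => simpa only [pow_succ] using ih.mul hf

end CommRing

section Field

variable [Field 𝕜] [IsTopologicalRing 𝕜] {k f g f' g' : α → 𝕜}

theorem div_const (hf : HasMainPart l k f g) (c : 𝕜) :
    HasMainPart l k (fun x => f x / c) fun x => g x / c := by
  simpa only [div_eq_mul_inv] using hf.mul (const c⁻¹)

variable [ContinuousInv₀ 𝕜] [T1Space 𝕜]

theorem inv {u : α → 𝕜} {c : 𝕜} (hf : HasMainPart l k f g) (hu : IsDecayMultiplier l k u)
    (huf : Tendsto (fun x => u x * f x) l (𝓝 c)) (hc : c ≠ 0) :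
    HasMainPart l k (fun x => (f x)⁻¹) fun x => (g x)⁻¹ := by
  have hug : Tendsto (fun x => u x * g x) l (𝓝 c) := by
    have herr := tendsto_zero_of_superpolynomialDecay (hu hf.decay)
    simpa [mul_sub] using huf.sub herr
  have hf_inv : IsDecayMultiplier l k fun x => (f x)⁻¹ := hu.inv_of_tendsto_mul huf hc
  have hg_inv : IsDecayMultiplier l k fun x => (g x)⁻¹ := hu.inv_of_tendsto_mul hug hc
  refine ⟨hg_inv, ((IsDecayMultiplier.const (-1)) (hf_inv (hg_inv hf.decay))).congr' ?_⟩
  filter_upwards [huf.eventually_ne hc, hug.eventually_ne hc] with x hfx hgx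
  have hf0 : f x ≠ 0 := right_ne_zero_of_mul hfx
  have hg0 : g x ≠ 0 := right_ne_zero_of_mul hgx
  field_simp
  ring

end Field

end HasMainPart

end MainPart

theorem HasMainPart.congr_of_pos {f g f' g' : ℝ → ℝ} (hf : HasMainPart atTop id f g)
    (hff' : ∀ θ > 0, f θ = f' θ) (hgg' : ∀ θ > 0, g θ = g' θ) : HasMainPart atTop id f' g' :=
  hf.congr' ((eventually_gt_atTop 0).mono hff') ((eventually_gt_atTop 0).mono hgg')

theorem tendsto_atTop_of_eq_comp_inv {f : ℝ → ℝ} (P : ℝ → ℝ) {c : ℝ} (hP : ContinuousAt P 0)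
    (hc : P 0 = c) (hf : ∀ θ > 0, f θ = P θ⁻¹) : Tendsto f atTop (𝓝 c) :=
  ((hc ▸ hP.tendsto).comp tendsto_inv_atTop_zero).congr'
    ((eventually_gt_atTop 0).mono fun θ hθ => (hf θ hθ).symm)

theorem hasMainPart_self : HasMainPart atTop id (fun θ : ℝ => θ) fun θ => θ := .param

theorem hasMainPart_inv_self : HasMainPart atTop id (fun θ : ℝ => θ⁻¹) fun θ => θ⁻¹ :=
  .refl (.of_tendsto tendsto_inv_atTop_zero)

theorem superpolynomialDecay_exp_neg :
    SuperpolynomialDecay atTop id fun θ : ℝ => Real.exp (-θ) :=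
  Real.tendsto_pow_mul_exp_neg_atTop_nhds_zero

theorem hasMainPart_one_sub_exp_neg :
    HasMainPart atTop id (fun θ : ℝ => 1 - Real.exp (-θ)) fun _ => 1 := by
  simpa only [sub_zero] using
    (HasMainPart.const (1 : ℝ)).sub (.zero_of_decay superpolynomialDecay_exp_neg)

theorem hasMainPart_one_sub_exp_neg_two_mul :
    HasMainPart atTop id (fun θ : ℝ => 1 - Real.exp (-2 * θ)) fun _ => 1 := by
  have hexp : HasMainPart atTop id (fun θ : ℝ => Real.exp (-2 * θ)) fun _ => 0 :=
    .zero_of_decay <| (superpolynomialDecay_exp_neg.mul superpolynomialDecay_exp_neg).congr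
      fun θ => by rw [Pi.mul_apply, ← Real.exp_add]; ring_nf
  simpa only [sub_zero] using (HasMainPart.const (1 : ℝ)).sub hexp

theorem hasMainPart_V1 : HasMainPart atTop id V1 fun θ => θ⁻¹ / 2 :=
  ((hasMainPart_inv_self.div_const 2).mul hasMainPart_one_sub_exp_neg_two_mul).congr_of_pos
    (fun θ hθ => by simp only [V1]; field_simp) (fun θ _ => mul_one _)

theorem hasMainPart_V2 : HasMainPart atTop id V2 fun θ => θ⁻¹ / 2 - 3 / 2 * θ⁻¹ ^ 3 := by
  have hE := (((HasMainPart.const 1).add hasMainPart_inv_self).pow 2).mul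
    ((hasMainPart_inv_self.div_const 2).mul hasMainPart_one_sub_exp_neg_two_mul)
  have hF := (((HasMainPart.const 2).mul (hasMainPart_inv_self.pow 2)).add
    ((HasMainPart.const 2).mul (hasMainPart_inv_self.pow 3))).mul hasMainPart_one_sub_exp_neg
  exact ((hE.add (hasMainPart_inv_self.pow 2)).sub hF).congr_of_pos
    (fun θ hθ => by simp only [V2]; field_simp) (fun θ _ => by ring)

theorem hasMainPart_V3 :
    HasMainPart atTop id V3 fun θ => θ⁻¹ / 2 - 2 / 3 * θ⁻¹ ^ 2 + 2 * θ⁻¹ ^ 5 := by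
  have hq := ((HasMainPart.const 2).mul hasMainPart_inv_self).add
    ((HasMainPart.const 2).mul (hasMainPart_inv_self.pow 2))
  have hp := (HasMainPart.const 1).add hq
  have hE := (hp.pow 2).mul
    ((hasMainPart_inv_self.div_const 2).mul hasMainPart_one_sub_exp_neg_two_mul)
  exact (((hE.add (((hq.pow 3).mul hasMainPart_self).div_const 6)).sub
    ((HasMainPart.const (8 / 6)).mul (hasMainPart_inv_self.pow 5))).sub
    (((HasMainPart.const 4).mul (hasMainPart_inv_self.pow 2)).mul hp)).congr_of_pos
    (fun θ hθ => by simp only [V3]; field_simp; ring) (fun θ hθ => by field_simp; ring)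

theorem hasMainPart_C12 : HasMainPart atTop id C12 fun θ => θ⁻¹ / 2 - θ⁻¹ ^ 2 / 2 := by
  have hE := ((hasMainPart_inv_self.div_const 2).add
    ((hasMainPart_inv_self.pow 2).div_const 2)).mul hasMainPart_one_sub_exp_neg_two_mul
  exact (hE.sub ((hasMainPart_inv_self.pow 2).mul hasMainPart_one_sub_exp_neg)).congr_of_pos
    (fun θ hθ => by simp only [C12]; field_simp; ring) (fun θ _ => by ring)

theorem hasMainPart_C13 :
    HasMainPart atTop id C13 fun θ => θ⁻¹ / 2 - θ⁻¹ ^ 2 + θ⁻¹ ^ 3 := by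
  have hE := (((hasMainPart_inv_self.div_const 2).add (hasMainPart_inv_self.pow 2)).add
    (hasMainPart_inv_self.pow 3)).mul hasMainPart_one_sub_exp_neg_two_mul
  exact (hE.sub ((HasMainPart.const 2).mul (hasMainPart_inv_self.pow 2))).congr_of_pos
    (fun θ hθ => by simp only [C13]; field_simp) (fun θ _ => by ring)

theorem hasMainPart_C23 :
    HasMainPart atTop id C23 fun θ => θ⁻¹ / 2 - θ⁻¹ ^ 2 / 2 - θ⁻¹ ^ 4 := by
  have hE := (((HasMainPart.const 1).add hasMainPart_inv_self).mul
    (((hasMainPart_inv_self.div_const 2).add (hasMainPart_inv_self.pow 2)).add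
      (hasMainPart_inv_self.pow 3))).mul hasMainPart_one_sub_exp_neg_two_mul
  have hF := (((hasMainPart_inv_self.pow 2).add
    ((HasMainPart.const 2).mul (hasMainPart_inv_self.pow 3))).add
      ((HasMainPart.const 2).mul (hasMainPart_inv_self.pow 4))).mul hasMainPart_one_sub_exp_neg
  exact ((hE.sub hF).sub (hasMainPart_inv_self.pow 2)).congr_of_pos
    (fun θ hθ => by simp only [C23]; field_simp) (fun θ _ => by ring)

theorem hasMainPart_inv_V1 : HasMainPart atTop id (fun θ => (V1 θ)⁻¹) fun θ => 2 * θ := by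
  have hlim : Tendsto (fun θ => θ * V1 θ) atTop (𝓝 (1 / 2)) :=
    (hasMainPart_self.mul hasMainPart_V1).tendsto <|
      tendsto_atTop_of_eq_comp_inv (fun _ => 1 / 2) (by fun_prop) rfl fun θ hθ => by field_simp
  exact (hasMainPart_V1.inv hasMainPart_self.isDecayMultiplier hlim (by norm_num)).congr_of_pos
    (fun _ _ => rfl) (fun θ hθ => by field_simp)

/-- The conditional variance of `G₃` given `G₁`, i.e. `γ²`. -/
noncomputable def condV3 (θ : ℝ) : ℝ := V3 θ - C13 θ ^ 2 / V1 θ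

/-- The conditional covariance of `G₂` and `G₃` given `G₁`, i.e. `b γ`. -/
noncomputable def condC23 (θ : ℝ) : ℝ := C23 θ - C12 θ * C13 θ / V1 θ

/-- The conditional variance of `G₂` given `G₁` and `G₃`, i.e. `c²`. -/
noncomputable def residualV2 (θ : ℝ) : ℝ :=
  V2 θ - C12 θ ^ 2 / V1 θ - condC23 θ ^ 2 / condV3 θ

/-- The covariance of `G₁` with `G₂ - G₁ / 3 - G₃ / 2`, i.e. `α (-α / 3 - β / 2 + a)`. -/
noncomputable def linearCov1 (θ : ℝ) : ℝ := -V1 θ / 3 - C13 θ / 2 + C12 θ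

/-- The conditional covariance of `G₃` with `G₂ - G₁ / 3 - G₃ / 2` given `G₁`, i.e.
`γ (b - γ / 2)`. -/
noncomputable def linearCov3 (θ : ℝ) : ℝ := condC23 θ - condV3 θ / 2

/-- The coefficient `S` of the quadratic form `S u² + (θ² α γ / 2) u v + v² / 2`, in terms of the
covariances; it equals `1 / (2 σ₁²)`. -/
noncomputable def quadCoeff (θ : ℝ) : ℝ :=
  -(θ ^ 2 / 3 + θ / 2) * V1 θ + θ ^ 2 * C13 θ / 2 + 1 / 2

/-- The determinant of the quadratic form `S u² + (θ² α γ / 2) u v + v² / 2`, where `S` is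
`quadCoeff`. -/
noncomputable def quadDet (θ : ℝ) : ℝ := quadCoeff θ / 2 - θ ^ 4 * V1 θ * condV3 θ / 16

/-- The maximum over `(u, v)` of `m u + n v - (S u² + (θ² α γ / 2) u v + v² / 2)`, where `S` is
`quadCoeff`, `m = -α / 3 - β / 2 + a` and `n = b - γ / 2`, when this form is positive definite. It
is a quarter of the inverse form at `(m, n)`, written without the square roots `α` and `γ`. -/
noncomputable def quadMax (θ : ℝ) : ℝ :=
  (linearCov1 θ ^ 2 / (2 * V1 θ) - θ ^ 2 * linearCov1 θ * linearCov3 θ / 2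
    + quadCoeff θ * linearCov3 θ ^ 2 / condV3 θ) / (4 * quadDet θ)

theorem hasMainPart_condV3 :
    HasMainPart atTop id condV3 fun θ => 4 / 3 * θ⁻¹ ^ 2 - 4 * θ⁻¹ ^ 3 + 4 * θ⁻¹ ^ 4 :=
  (hasMainPart_V3.sub ((hasMainPart_C13.pow 2).mul hasMainPart_inv_V1)).congr_of_pos
    (fun _ _ => rfl) (fun θ hθ => by field_simp; ring)

theorem hasMainPart_condC23 : HasMainPart atTop id condC23 fun θ => θ⁻¹ ^ 2 - 2 * θ⁻¹ ^ 3 :=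
  (hasMainPart_C23.sub
    ((hasMainPart_C12.mul hasMainPart_C13).mul hasMainPart_inv_V1)).congr_of_pos
    (fun _ _ => rfl) (fun θ hθ => by field_simp; ring)

theorem hasMainPart_linearCov1 :
    HasMainPart atTop id linearCov1 fun θ => θ⁻¹ / 12 - θ⁻¹ ^ 3 / 2 :=
  (((hasMainPart_V1.neg.div_const 3).sub (hasMainPart_C13.div_const 2)).add
    hasMainPart_C12).congr_of_pos (fun _ _ => rfl) (fun θ _ => by ring)

theorem hasMainPart_linearCov3 :
    HasMainPart atTop id linearCov3 fun θ => θ⁻¹ ^ 2 / 3 - 2 * θ⁻¹ ^ 4 :=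
  (hasMainPart_condC23.sub (hasMainPart_condV3.div_const 2)).congr_of_pos
    (fun _ _ => rfl) (fun θ _ => by ring)

theorem hasMainPart_quadCoeff :
    HasMainPart atTop id quadCoeff fun θ => θ / 12 - 1 / 4 + θ⁻¹ / 2 := by
  have hpoly := (((hasMainPart_self.pow 2).div_const 3).add (hasMainPart_self.div_const 2)).neg
  exact (((hpoly.mul hasMainPart_V1).add
    (((hasMainPart_self.pow 2).mul hasMainPart_C13).div_const 2)).add
    (HasMainPart.const (1 / 2))).congr_of_pos (fun _ _ => rfl) (fun θ hθ => by field_simp; ring)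

theorem hasMainPart_quadDet : HasMainPart atTop id quadDet fun θ => θ⁻¹ / 8 :=
  ((hasMainPart_quadCoeff.div_const 2).sub
    ((((hasMainPart_self.pow 4).mul hasMainPart_V1).mul hasMainPart_condV3).div_const
      16)).congr_of_pos (fun _ _ => rfl) (fun θ hθ => by field_simp; ring)

theorem tendsto_sq_mul_condV3 : Tendsto (fun θ => θ ^ 2 * condV3 θ) atTop (𝓝 (4 / 3)) :=
  ((hasMainPart_self.pow 2).mul hasMainPart_condV3).tendsto <|
    tendsto_atTop_of_eq_comp_inv (fun t => 4 / 3 - 4 * t + 4 * t ^ 2) (by fun_prop)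
      (by norm_num) fun θ hθ => by field_simp

theorem tendsto_inv_mul_quadCoeff :
    Tendsto (fun θ => θ⁻¹ * quadCoeff θ) atTop (𝓝 (1 / 12)) :=
  (hasMainPart_inv_self.mul hasMainPart_quadCoeff).tendsto <|
    tendsto_atTop_of_eq_comp_inv (fun t => 1 / 12 - t / 4 + t ^ 2 / 2) (by fun_prop)
      (by norm_num) fun θ hθ => by field_simp

theorem tendsto_mul_quadDet : Tendsto (fun θ => θ * quadDet θ) atTop (𝓝 (1 / 8)) :=
  (hasMainPart_self.mul hasMainPart_quadDet).tendsto <|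
    tendsto_atTop_of_eq_comp_inv (fun _ => 1 / 8) (by fun_prop) rfl fun θ hθ => by field_simp

theorem hasMainPart_inv_condV3 :
    HasMainPart atTop id (fun θ => (condV3 θ)⁻¹)
      fun θ => 3 * θ ^ 4 / (4 * (θ * (θ - 3) + 3)) :=
  (hasMainPart_condV3.inv (hasMainPart_self.pow 2).isDecayMultiplier tendsto_sq_mul_condV3
    (by norm_num)).congr_of_pos (fun _ _ => rfl) fun θ hθ => by
      rw [← inv_div]
      field_simp

theorem hasMainPart_inv_quadDet :
    HasMainPart atTop id (fun θ => (quadDet θ)⁻¹) fun θ => 8 * θ :=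
  (hasMainPart_quadDet.inv hasMainPart_self.isDecayMultiplier tendsto_mul_quadDet
    (by norm_num)).congr_of_pos (fun _ _ => rfl) fun θ hθ => by field_simp

theorem mul_sub_three_add_three_pos (θ : ℝ) : 0 < θ * (θ - 3) + 3 := by
  nlinarith [sq_nonneg (θ - 3 / 2)]

theorem hasMainPart_residualV2 :
    HasMainPart atTop id residualV2
      fun θ => (θ - 2) * (θ ^ 2 - 6 * θ + 12) / (4 * θ ^ 3 * (θ * (θ - 3) + 3)) :=
  ((hasMainPart_V2.sub ((hasMainPart_C12.pow 2).mul hasMainPart_inv_V1)).sub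
    ((hasMainPart_condC23.pow 2).mul hasMainPart_inv_condV3)).congr_of_pos (fun _ _ => rfl)
    fun θ hθ => by
      have hden := (mul_sub_three_add_three_pos θ).ne'
      field_simp
      ring

theorem hasMainPart_quadMax :
    HasMainPart atTop id quadMax
      fun θ => (θ ^ 2 - 6) ^ 2 / (24 * θ ^ 4 * (θ * (θ - 3) + 3)) := by
  have hfirst := ((hasMainPart_linearCov1.pow 2).mul hasMainPart_inv_V1).div_const 2
  have hcross := (((hasMainPart_self.pow 2).mul hasMainPart_linearCov1).mul
    hasMainPart_linearCov3).div_const 2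
  have hsecond := (hasMainPart_quadCoeff.mul (hasMainPart_linearCov3.pow 2)).mul
    hasMainPart_inv_condV3
  refine ((((hfirst.sub hcross).add hsecond).mul hasMainPart_inv_quadDet).div_const
    4).congr_of_pos (fun θ _ => ?_) fun θ hθ => ?_
  · simp only [quadMax, div_eq_mul_inv, mul_inv]
    ring
  · have hden := (mul_sub_three_add_three_pos θ).ne'
    field_simp
    ring

theorem eventually_condV3_pos : ∀ᶠ θ in atTop, 0 < condV3 θ := by
  filter_upwards [tendsto_sq_mul_condV3.eventually_const_lt (by norm_num : (0 : ℝ) < 4 / 3)]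
    with θ hθ
  exact pos_of_mul_pos_right hθ (sq_nonneg θ)

section CompletingSquares

theorem sq_div_add_sq_div_eq_of_quadForm {𝕜 : Type*} [Field 𝕜] {s r k : 𝕜} (m n : 𝕜) (hs : s ≠ 0)
    (hdet : s * r - k ^ 2 ≠ 0) :
    m ^ 2 / s + (n - k / s * m) ^ 2 / (r - k ^ 2 / s)
      = (r * m ^ 2 - 2 * k * m * n + s * n ^ 2) / (s * r - k ^ 2) := by
  have hschur : r - k ^ 2 / s = (s * r - k ^ 2) / s := by field_simp
  rw [hschur]
  field_simp
  ring

variable {θ : ℝ}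

theorem V1_pos (hθ : 0 < θ) : 0 < V1 θ :=
  div_pos (sub_pos.2 (Real.exp_lt_one_iff.2 (by linarith))) (by positivity)

theorem alphaC_pos (hθ : 0 < θ) : 0 < alphaC θ := Real.sqrt_pos.2 (V1_pos hθ)

theorem alphaC_sq (hθ : 0 < θ) : alphaC θ ^ 2 = V1 θ := Real.sq_sqrt (V1_pos hθ).le

theorem alphaC_mul_betaC (hθ : 0 < θ) : alphaC θ * betaC θ = C13 θ :=
  mul_div_cancel₀ _ (alphaC_pos hθ).ne'

theorem alphaC_mul_aC (hθ : 0 < θ) : alphaC θ * aC θ = C12 θ :=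
  mul_div_cancel₀ _ (alphaC_pos hθ).ne'

theorem sub_betaC_sq_eq_condV3 (hθ : 0 < θ) : V3 θ - betaC θ ^ 2 = condV3 θ := by
  rw [condV3, betaC, div_pow, alphaC_sq hθ]

theorem gammaC_pos (hθ : 0 < θ) (hV3 : 0 < condV3 θ) : 0 < gammaC θ :=
  Real.sqrt_pos.2 (hV3.trans_eq (sub_betaC_sq_eq_condV3 hθ).symm)

theorem gammaC_sq (hθ : 0 < θ) (hV3 : 0 ≤ condV3 θ) : gammaC θ ^ 2 = condV3 θ := by
  rw [gammaC, sub_betaC_sq_eq_condV3 hθ, Real.sq_sqrt hV3]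

theorem gammaC_mul_bC (hθ : 0 < θ) (hV3 : 0 < condV3 θ) : gammaC θ * bC θ = condC23 θ := by
  rw [bC, mul_div_cancel₀ _ (gammaC_pos hθ hV3).ne', condC23, aC, betaC, div_mul_div_comm,
    ← sq, alphaC_sq hθ]

theorem c2C_eq_residualV2 (hθ : 0 < θ) (hV3 : 0 < condV3 θ) : c2C θ = residualV2 θ := by
  have hb : bC θ = condC23 θ / gammaC θ :=
    eq_div_of_mul_eq (gammaC_pos hθ hV3).ne' ((mul_comm _ _).trans (gammaC_mul_bC hθ hV3))
  rw [c2C, residualV2, hb, aC, div_pow, div_pow, alphaC_sq hθ, gammaC_sq hθ hV3.le]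

theorem sigma1sq_eq (hθ : 0 < θ) : sigma1sq θ = (quadCoeff θ)⁻¹ / 2 := by
  rw [sigma1sq, mul_inv_rev, ← div_eq_mul_inv, quadCoeff, alphaC_sq hθ, mul_assoc (θ ^ 2),
    alphaC_mul_betaC hθ]

theorem sigma2sq_eq (hθ : 0 < θ) :
    sigma2sq θ
      = (1 / 2 - (θ ^ 2 * alphaC θ * gammaC θ / 4) ^ 2 / quadCoeff θ)⁻¹ / 2 := by
  rw [sigma2sq, sigma1sq_eq hθ, mul_inv_rev, ← div_eq_mul_inv]
  ring

theorem alphaC_mul_linear (hθ : 0 < θ) :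
    alphaC θ * (-(alphaC θ) / 3 - betaC θ / 2 + aC θ) = linearCov1 θ := by
  rw [linearCov1, ← alphaC_sq hθ, ← alphaC_mul_betaC hθ, ← alphaC_mul_aC hθ]
  ring

theorem gammaC_mul_linear (hθ : 0 < θ) (hV3 : 0 < condV3 θ) :
    gammaC θ * (bC θ - gammaC θ / 2) = linearCov3 θ := by
  rw [linearCov3, ← gammaC_mul_bC hθ hV3, ← gammaC_sq hθ hV3.le]
  ring

theorem sigma_sq_sum_eq_two_mul_quadMax (hθ : 0 < θ) (hV3 : 0 < condV3 θ)
    (hS : quadCoeff θ ≠ 0) (hdet : quadDet θ ≠ 0) :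
    sigma1sq θ * (-(alphaC θ) / 3 - betaC θ / 2 + aC θ) ^ 2
      + sigma2sq θ * (bC θ - gammaC θ / 2 - θ ^ 2 * alphaC θ * gammaC θ * sigma1sq θ / 2
          * (-(alphaC θ) / 3 - betaC θ / 2 + aC θ)) ^ 2
      = 2 * quadMax θ := by
  have hα := (alphaC_pos hθ).ne'
  have hγ := (gammaC_pos hθ hV3).ne'
  have hdet_eq : quadCoeff θ * (1 / 2) - (θ ^ 2 * alphaC θ * gammaC θ / 4) ^ 2 = quadDet θ := by
    rw [quadDet, ← alphaC_sq hθ, ← gammaC_sq hθ hV3.le]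
    ring
  have hsquares := sq_div_add_sq_div_eq_of_quadForm (-(alphaC θ) / 3 - betaC θ / 2 + aC θ)
    (bC θ - gammaC θ / 2) hS (hdet_eq ▸ hdet)
  rw [hdet_eq] at hsquares
  rw [quadMax, sigma2sq_eq hθ, sigma1sq_eq hθ, ← alphaC_mul_linear hθ,
    ← gammaC_mul_linear hθ hV3, ← alphaC_sq hθ, ← gammaC_sq hθ hV3.le]
  generalize -(alphaC θ) / 3 - betaC θ / 2 + aC θ = m at *
  generalize bC θ - gammaC θ / 2 = n at *
  calc _ = (m ^ 2 / quadCoeff θ + (n - θ ^ 2 * alphaC θ * gammaC θ / 4 / quadCoeff θ * m) ^ 2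
        / (1 / 2 - (θ ^ 2 * alphaC θ * gammaC θ / 4) ^ 2 / quadCoeff θ)) / 2 := by ring
    _ = _ := by
      rw [hsquares]
      field_simp
      ring

end CompletingSquares

/-- The quantity `A₂(θ)` with parameter `h`. -/
noncomputable def A2 (h θ : ℝ) : ℝ :=
  h * θ / 6
    - sigma1sq θ / 2 * h * θ ^ 3 * (-(alphaC θ) / 3 - betaC θ / 2 + aC θ) ^ 2
    - sigma2sq θ / 2 * h * θ ^ 3 *
        (bC θ - gammaC θ / 2 -
          (θ ^ 2 * alphaC θ * gammaC θ * sigma1sq θ / 2) *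
            (-(alphaC θ) / 3 - betaC θ / 2 + aC θ)) ^ 2
    - 1 / 2 * h * θ ^ 3 * c2C θ

theorem A2_eq_of_condV3_pos (h : ℝ) {θ : ℝ} (hθ : 0 < θ) (hV3 : 0 < condV3 θ)
    (hS : quadCoeff θ ≠ 0) (hdet : quadDet θ ≠ 0) :
    A2 h θ = h * (θ / 6 - θ ^ 3 * quadMax θ - θ ^ 3 * residualV2 θ / 2) := by
  rw [A2, c2C_eq_residualV2 hθ hV3]
  linear_combination (-h * θ ^ 3 / 2) * sigma_sq_sum_eq_two_mul_quadMax hθ hV3 hS hdet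

theorem hasMainPart_A2 (h : ℝ) : HasMainPart atTop id (A2 h) fun θ => h * (1 / 2 - θ⁻¹ / 2) := by
  have hmain := (HasMainPart.const h).mul (((hasMainPart_self.div_const 6).sub
    ((hasMainPart_self.pow 3).mul hasMainPart_quadMax)).sub
    (((hasMainPart_self.pow 3).mul hasMainPart_residualV2).div_const 2))
  refine hmain.congr' ?_ ?_
  · filter_upwards [eventually_gt_atTop 0, eventually_condV3_pos,
      tendsto_inv_mul_quadCoeff.eventually_ne (by norm_num : (1 / 12 : ℝ) ≠ 0),
      tendsto_mul_quadDet.eventually_ne (by norm_num : (1 / 8 : ℝ) ≠ 0)] with θ hθ hV3 hS hdet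
    exact (A2_eq_of_condV3_pos h hθ hV3 (right_ne_zero_of_mul hS)
      (right_ne_zero_of_mul hdet)).symm
  · filter_upwards [eventually_gt_atTop 0] with θ hθ
    have hden := (mul_sub_three_add_three_pos θ).ne'
    field_simp
    ring

theorem A2_tendsto_general (h : ℝ) : Tendsto (A2 h) atTop (𝓝 (h / 2)) :=
  (hasMainPart_A2 h).tendsto <|
    tendsto_atTop_of_eq_comp_inv (fun t => h * (1 / 2 - t / 2)) (by fun_prop) (by ring)
      fun _ _ => rfl

theorem A2_tendsto (h : ℝ) (hh : 0 < h)
    (hwd : ∀ᶠ θ : ℝ in atTop,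
      0 < V3 θ - betaC θ ^ 2 ∧
      0 < -(θ ^ 2 / 3 + θ / 2) * alphaC θ ^ 2 + θ ^ 2 * alphaC θ * betaC θ / 2 + 1 / 2 ∧
      0 < -(sigma1sq θ * θ ^ 4 * alphaC θ ^ 2 * gammaC θ ^ 2 / 8) + 1 / 2) :
    Tendsto (fun θ : ℝ =>
        h * θ / 6
          - sigma1sq θ / 2 * h * θ ^ 3 * (-(alphaC θ) / 3 - betaC θ / 2 + aC θ) ^ 2
          - sigma2sq θ / 2 * h * θ ^ 3 *
              (bC θ - gammaC θ / 2 -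
                (θ ^ 2 * alphaC θ * gammaC θ * sigma1sq θ / 2) *
                  (-(alphaC θ) / 3 - betaC θ / 2 + aC θ)) ^ 2
          - 1 / 2 * h * θ ^ 3 * c2C θ)
      atTop (nhds (h / 2)) :=
  A2_tendsto_general h
end

section
/- Let B₂ > 0, p₂₁ ≥ 0, D ≥ 0, Δ ≥ 0 be reals, and let t₂′, x, z be reals with |x − z| ≤ D and |2B₂(p₂₁ + 1)z − t₂′| ≤ Δ. Then exp(−(1/(4B₂))·(t₂′ − 2B₂(p₂₁ + 1)z)² − B₂·p₂₁²·D² − p₂₁·D·Δ) ≤ exp(−(1/(4B₂))·(t₂′ − 2B₂(p₂₁·x + z))²) ≤ exp(−(1/(4B₂))·(t₂′ − 2B₂(p₂₁ + 1)z)² + p₂₁·D·Δ). -/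
/-!
With `u = t₂' - 2 * B₂ * (p₂₁ + 1) * z` and `h = p₂₁ * (x - z)`, the two weights have exponents
`-(u - 2 * B₂ * h) ^ 2 / (4 * B₂)` and `-u ^ 2 / (4 * B₂)`, which differ by `u * h - B₂ * h ^ 2`.
The cross term is at most `p₂₁ * D * Δ` in absolute value, while the quadratic term has a sign and
so costs something in the lower bound only.
-/

section GaussianExponent

variable {K : Type*} [Field K]

lemma gaussian_exponent_shift_eq [NeZero (2 : K)] {b : K} (hb : b ≠ 0) (u h : K) :
    -(1 / (4 * b)) * (u - 2 * b * h) ^ 2 = -(1 / (4 * b)) * u ^ 2 + u * h - b * h ^ 2 := by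
  have two_ne : (2 : K) ≠ 0 := NeZero.ne 2
  rw [show (4 : K) = 2 * 2 by norm_num]
  field_simp
  ring

variable [LinearOrder K] [IsStrictOrderedRing K] {b u h η Δ : K}

lemma abs_mul_le_mul_of_abs_le (hh : |h| ≤ η) (hu : |u| ≤ Δ) : |u * h| ≤ η * Δ := by
  rw [abs_mul, mul_comm]
  exact mul_le_mul hh hu (abs_nonneg u) ((abs_nonneg h).trans hh)

lemma le_gaussian_exponent_shift (hb : 0 < b) (hh : |h| ≤ η) (hu : |u| ≤ Δ) :
    -(1 / (4 * b)) * u ^ 2 - b * η ^ 2 - η * Δ ≤ -(1 / (4 * b)) * (u - 2 * b * h) ^ 2 := by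
  have cross_term : -(η * Δ) ≤ u * h := neg_le_of_abs_le (abs_mul_le_mul_of_abs_le hh hu)
  have quadratic_term : b * h ^ 2 ≤ b * η ^ 2 :=
    mul_le_mul_of_nonneg_left (sq_le_sq.mpr (hh.trans (le_abs_self η))) hb.le
  rw [gaussian_exponent_shift_eq hb.ne']
  linarith

lemma gaussian_exponent_shift_le (hb : 0 < b) (hh : |h| ≤ η) (hu : |u| ≤ Δ) :
    -(1 / (4 * b)) * (u - 2 * b * h) ^ 2 ≤ -(1 / (4 * b)) * u ^ 2 + η * Δ := by
  have cross_term : u * h ≤ η * Δ := le_of_abs_le (abs_mul_le_mul_of_abs_le hh hu)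
  have quadratic_term : 0 ≤ b * h ^ 2 := by positivity
  rw [gaussian_exponent_shift_eq hb.ne']
  linarith

end GaussianExponent

theorem gaussian_weight_separation
    (B₂ p₂₁ D Δ : ℝ) (hB₂ : 0 < B₂) (hp : 0 ≤ p₂₁) (hD : 0 ≤ D) (hΔ : 0 ≤ Δ)
    (t₂' x z : ℝ) (hxz : |x - z| ≤ D) (ht : |2 * B₂ * (p₂₁ + 1) * z - t₂'| ≤ Δ) :
    Real.exp (-(1 / (4 * B₂)) * (t₂' - 2 * B₂ * (p₂₁ + 1) * z) ^ 2
        - B₂ * p₂₁ ^ 2 * D ^ 2 - p₂₁ * D * Δ)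
      ≤ Real.exp (-(1 / (4 * B₂)) * (t₂' - 2 * B₂ * (p₂₁ * x + z)) ^ 2) ∧
    Real.exp (-(1 / (4 * B₂)) * (t₂' - 2 * B₂ * (p₂₁ * x + z)) ^ 2)
      ≤ Real.exp (-(1 / (4 * B₂)) * (t₂' - 2 * B₂ * (p₂₁ + 1) * z) ^ 2 + p₂₁ * D * Δ) := by
  have shift_eq : t₂' - 2 * B₂ * (p₂₁ * x + z)
      = t₂' - 2 * B₂ * (p₂₁ + 1) * z - 2 * B₂ * (p₂₁ * (x - z)) := by ring
  have abs_shift_le : |p₂₁ * (x - z)| ≤ p₂₁ * D := by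
    rw [abs_mul, abs_of_nonneg hp]
    exact mul_le_mul_of_nonneg_left hxz hp
  rw [abs_sub_comm] at ht
  rw [shift_eq, mul_assoc B₂, ← mul_pow]
  exact ⟨Real.exp_le_exp.mpr (le_gaussian_exponent_shift hB₂ abs_shift_le ht),
    Real.exp_le_exp.mpr (gaussian_exponent_shift_le hB₂ abs_shift_le ht)⟩
end

section
/- Let E₀, E₁, …, E_n be measurable spaces. For 1 ≤ k ≤ n let 𝔔_k be a Markov kernel from E_{k−1} to E_k, let Ψ_k : E_k → [0,∞) be bounded measurable, and set 𝔕_k(x, dx′) = Ψ_k(x′)·𝔔_k(x, dx′). Assume each 𝔕_k is ε_k-mixing: there exist a nonzero finite measure λ_k on E_k and constants ε′_k, ε″_k > 0 with ε′_k·ε″_k = ε_k² and ε_k ∈ (0,1), such that ε′_k·λ_k(A) ≤ 𝔕_k(x, A) ≤ (1/ε″_k)·λ_k(A) for all x ∈ E_{k−1} and all measurable A ⊆ E_k. Let Ψ_{n|0}(x) = (𝔕_1𝔕_2⋯𝔕_n)(x, E_n) (the total mass at x of the composed kernel). Then for any probability measures η₀, η₀′ on E₀, the probability measures η_n = normalization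 of (𝔕_1⋯𝔕_n applied to η₀) and η_n′ = normalization of (𝔕_1⋯𝔕_n applied to η₀′) satisfy ‖η_n − η_n′‖ ≤ (∏_{k=1}^n (1 − ε_k²)) · ‖Ψ_{n|0}•η₀ − Ψ_{n|0}•η₀′‖. -/
open MeasureTheory ProbabilityTheory

/-- Total variation distance `sup_A |μ(A) − ν(A)|` between two measures. -/
noncomputable def tvDist {E : Type*} [MeasurableSpace E] (μ ν : Measure E) : ℝ :=
  ⨆ s : { s : Set E // MeasurableSet s }, |(μ s).toReal - (ν s).toReal|

/-- Normalization `m / m(E)` of a measure (the zero measure if `m` is zero). -/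
noncomputable def normalizeMeasure {E : Type*} [MeasurableSpace E] (m : Measure E) : Measure E :=
  (m Set.univ)⁻¹ • m

/-- The probability measure `Ψ•μ (dv) = Ψ(v) μ(dv) / ∫ Ψ dμ`. -/
noncomputable def bullet {E : Type*} [MeasurableSpace E] (Ψ : E → ℝ) (μ : Measure E) :
    Measure E :=
  (ENNReal.ofReal (∫ v, Ψ v ∂μ))⁻¹ • μ.withDensity fun v => ENNReal.ofReal (Ψ v)

/-- The composed kernel `𝔖₀𝔖₁⋯𝔖_{n−1}` from `E 0` to `E n`. -/
noncomputable def compChain {E : ℕ → Type*} [∀ k, MeasurableSpace (E k)]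
    (S : ∀ k, Kernel (E k) (E (k + 1))) : (n : ℕ) → Kernel (E 0) (E n)
  | 0 => Kernel.id
  | n + 1 => (S n).comp (compChain S n)

open scoped ENNReal

/-!
Let `G_k(x)` be the total mass of `𝔖_k ⋯ 𝔖_{n-1}` started from `x`, so that `G_n = 1`, and let `η_k`
be the normalization of `η₀ 𝔖₀ ⋯ 𝔖_{k-1}`. The reweighted flow `G_k • η_k` starts at `Ψ_{n|0} • η₀`,
ends at `η_n`, and evolves linearly: one step from `k` to `k + 1` is the action of the Markov kernel
proportional to `𝔖_k(x, dy) G_{k+1}(y)`. By the mixing bounds this kernel dominates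
`ε_k² (G_{k+1} • λ_k)` for every `x`, hence contracts total variation by the factor `1 - ε_k²`.
-/

section Kernels

variable {X Y : Type*} [MeasurableSpace X] [MeasurableSpace Y]

section TotalVariation

lemma measureReal_bind_eq_integral (μ : Measure X) (κ : Kernel X Y) [IsFiniteKernel κ]
    {A : Set Y} (hA : MeasurableSet A) :
    (μ.bind κ).real A = ∫ x, (κ x).real A ∂μ := by
  simp only [measureReal_def]
  rw [Measure.bind_apply hA κ.aemeasurable,
    integral_toReal (κ.measurable_coe hA).aemeasurable (ae_of_all _ fun x ↦ measure_lt_top _ _)]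

variable {μ ν : Measure X} [IsProbabilityMeasure μ] [IsProbabilityMeasure ν]

lemma measureReal_sub_le_tvDist {A : Set X} (hA : MeasurableSet A) :
    μ.real A - ν.real A ≤ tvDist μ ν := by
  have hbdd : BddAbove (Set.range fun A : {A : Set X // MeasurableSet A} ↦
      |μ.real A - ν.real A|) := by
    refine ⟨1, ?_⟩
    rintro _ ⟨B, rfl⟩
    exact abs_sub_le_of_nonneg_of_le measureReal_nonneg measureReal_le_one
      measureReal_nonneg measureReal_le_one
  exact (le_abs_self _).trans (le_ciSup hbdd ⟨A, hA⟩)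

/-- The one-sided bound suffices because passing to complements exchanges the two signs. -/
lemma tvDist_le {c : ℝ} (h : ∀ A, MeasurableSet A → μ.real A - ν.real A ≤ c) :
    tvDist μ ν ≤ c := by
  have : Nonempty {A : Set X // MeasurableSet A} := ⟨⟨∅, .empty⟩⟩
  refine ciSup_le fun ⟨A, hA⟩ ↦ abs_sub_le_iff.2 ⟨h A hA, ?_⟩
  have hcompl := h Aᶜ hA.compl
  rw [probReal_compl_eq_one_sub hA, probReal_compl_eq_one_sub hA] at hcompl
  simp only [← measureReal_def]
  linarith

lemma integral_sub_integral_le_mul_tvDist {f : X → ℝ} (hf : Measurable f) {a b : ℝ}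
    (ha : ∀ x, a ≤ f x) (hb : ∀ x, f x ≤ b) :
    ∫ x, f x ∂μ - ∫ x, f x ∂ν ≤ (b - a) * tvDist μ ν := by
  have hint (ρ : Measure X) [IsFiniteMeasure ρ] : Integrable f ρ :=
    .of_mem_Icc a b hf.aemeasurable (ae_of_all _ fun x ↦ ⟨ha x, hb x⟩)
  obtain ⟨x₀⟩ := nonempty_of_isProbabilityMeasure μ
  obtain ⟨s, hs, hle, hge⟩ := exists_isHahnDecomposition ν μ
  have on_s : ∫ x in s, (b - f x) ∂ν ≤ ∫ x in s, (b - f x) ∂μ :=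
    integral_mono_measure hle (ae_of_all _ fun x ↦ sub_nonneg.2 (hb x))
      ((integrable_const b).sub (hint _))
  have on_compl : ∫ x in sᶜ, (f x - a) ∂μ ≤ ∫ x in sᶜ, (f x - a) ∂ν :=
    integral_mono_measure hge (ae_of_all _ fun x ↦ sub_nonneg.2 (ha x))
      ((hint _).sub (integrable_const a))
  simp only [integral_sub (integrable_const b) (hint _),
    integral_sub (hint _) (integrable_const a), integral_const, smul_eq_mul,
    measureReal_restrict_apply_univ, probReal_compl_eq_one_sub hs] at on_s on_compl
  calc ∫ x, f x ∂μ - ∫ x, f x ∂ν ≤ (b - a) * (μ.real s - ν.real s) := by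
        rw [← integral_add_compl hs (hint μ), ← integral_add_compl hs (hint ν)]
        linarith
    _ ≤ (b - a) * tvDist μ ν :=
        mul_le_mul_of_nonneg_left (measureReal_sub_le_tvDist hs)
          (sub_nonneg.2 ((ha x₀).trans (hb x₀)))

/-- Doeblin's minorization confines `x ↦ P x A` to `[δ π(A), δ π(A) + 1 - δ]`, by applying it to
both `A` and its complement. -/
lemma tvDist_bind_le_of_minorization {P : Kernel X Y} [IsMarkovKernel P] {π : Measure Y}
    [IsProbabilityMeasure π] {δ : ℝ≥0∞} (hP : ∀ x, δ • π ≤ P x) :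
    tvDist (μ.bind P) (ν.bind P) ≤ (1 - δ.toReal) * tvDist μ ν := by
  have lower {A : Set Y} (x : X) : δ.toReal * π.real A ≤ (P x).real A := by
    simpa [measureReal_def] using ENNReal.toReal_mono (measure_ne_top _ _) (hP x A)
  refine tvDist_le fun A hA ↦ ?_
  have upper (x : X) : (P x).real A ≤ δ.toReal * π.real A + (1 - δ.toReal) := by
    have hcompl := lower (A := Aᶜ) x
    rw [probReal_compl_eq_one_sub hA, probReal_compl_eq_one_sub hA] at hcompl
    linarith
  rw [measureReal_bind_eq_integral μ P hA, measureReal_bind_eq_integral ν P hA]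
  calc ∫ x, (P x).real A ∂μ - ∫ x, (P x).real A ∂ν
      ≤ (δ.toReal * π.real A + (1 - δ.toReal) - δ.toReal * π.real A) * tvDist μ ν :=
        integral_sub_integral_le_mul_tvDist (P.measurable_coe hA).ennreal_toReal lower upper
    _ = (1 - δ.toReal) * tvDist μ ν := by rw [add_sub_cancel_left]

end TotalVariation

section BoltzmannGibbs

/-- The Boltzmann–Gibbs transform `F • μ`, with density `F / ∫ F dμ` with respect to `μ`. It is the
`ℝ≥0∞`-valued counterpart of `bullet`, so that potentials can be Lebesgue integrals; it is a
probability measure only when `∫ F dμ` is neither `0` nor `∞`. -/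
noncomputable def boltzmannGibbs (F : X → ℝ≥0∞) (μ : Measure X) : Measure X :=
  normalizeMeasure (μ.withDensity F)

lemma boltzmannGibbs_apply (F : X → ℝ≥0∞) (μ : Measure X) {A : Set X} (hA : MeasurableSet A) :
    boltzmannGibbs F μ A = (∫⁻ x, F x ∂μ)⁻¹ * ∫⁻ x in A, F x ∂μ := by
  simp [boltzmannGibbs, normalizeMeasure, withDensity_apply _ hA]

lemma boltzmannGibbs_one (μ : Measure X) :
    boltzmannGibbs (fun _ ↦ 1) μ = normalizeMeasure μ :=
  congrArg normalizeMeasure withDensity_one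

lemma lintegral_boltzmannGibbs {F g : X → ℝ≥0∞} (hF : Measurable F) (hg : Measurable g)
    (μ : Measure X) :
    ∫⁻ x, g x ∂boltzmannGibbs F μ = (∫⁻ x, F x ∂μ)⁻¹ * ∫⁻ x, F x * g x ∂μ := by
  simp [boltzmannGibbs, normalizeMeasure, lintegral_withDensity_eq_lintegral_mul _ hF hg]

lemma isProbabilityMeasure_boltzmannGibbs {F : X → ℝ≥0∞} {μ : Measure X}
    (h0 : ∫⁻ x, F x ∂μ ≠ 0) (htop : ∫⁻ x, F x ∂μ ≠ ∞) :
    IsProbabilityMeasure (boltzmannGibbs F μ) :=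
  ⟨by rw [boltzmannGibbs_apply F μ .univ, Measure.restrict_univ, ENNReal.inv_mul_cancel h0 htop]⟩

lemma bullet_toReal_eq_boltzmannGibbs {F : X → ℝ≥0∞} {μ : Measure X} (hF : AEMeasurable F μ)
    (htop : ∫⁻ x, F x ∂μ ≠ ∞) :
    bullet (fun x ↦ (F x).toReal) μ = boltzmannGibbs F μ := by
  have hfin : ∀ᵐ x ∂μ, F x < ∞ := ae_lt_top' hF htop
  have hdensity : μ.withDensity (fun x ↦ ENNReal.ofReal (F x).toReal) = μ.withDensity F :=
    withDensity_congr_ae (hfin.mono fun x hx ↦ ENNReal.ofReal_toReal hx.ne)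
  simp [bullet, boltzmannGibbs, normalizeMeasure, hdensity, integral_toReal hF hfin,
    ENNReal.ofReal_toReal htop]

lemma smul_boltzmannGibbs_le {F : X → ℝ≥0∞} {μ ν : Measure X} {a b : ℝ≥0∞} (hb0 : b ≠ 0)
    (hbtop : b ≠ ∞) (ha : a • μ ≤ ν) (hb : ν ≤ b • μ) :
    (a / b) • boltzmannGibbs F μ ≤ boltzmannGibbs F ν := by
  refine Measure.le_iff.2 fun A hA ↦ ?_
  have hmass : ∫⁻ x, F x ∂ν ≤ b * ∫⁻ x, F x ∂μ := by
    simpa using lintegral_mono' hb (le_refl F)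
  have hA_le : a * ∫⁻ x in A, F x ∂μ ≤ ∫⁻ x in A, F x ∂ν := by
    simpa using lintegral_mono' (Measure.restrict_mono_measure ha A) (le_refl F)
  rw [Measure.smul_apply, smul_eq_mul, boltzmannGibbs_apply F μ hA, boltzmannGibbs_apply F ν hA]
  calc a / b * ((∫⁻ x, F x ∂μ)⁻¹ * ∫⁻ x in A, F x ∂μ)
      = (b * ∫⁻ x, F x ∂μ)⁻¹ * (a * ∫⁻ x in A, F x ∂μ) := by
        rw [ENNReal.mul_inv (.inl hb0) (.inl hbtop), div_eq_mul_inv]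
        ring
    _ ≤ (∫⁻ x, F x ∂ν)⁻¹ * ∫⁻ x in A, F x ∂ν := by gcongr

/-- Doob's transform of the kernel `κ` by `F`, i.e. `x ↦ F • κ x`, the normalization of
`F(y) κ(x, dy)`. -/
noncomputable def doobTransform (κ : Kernel X Y) {F : Y → ℝ≥0∞} (hF : Measurable F) :
    Kernel X Y where
  toFun x := boltzmannGibbs F (κ x)
  measurable' := by
    refine Measure.measurable_of_measurable_coe _ fun A hA ↦ ?_
    simp only [boltzmannGibbs_apply F _ hA, ← lintegral_indicator hA]
    exact hF.lintegral_kernel.inv.mul (hF.indicator hA).lintegral_kernel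

lemma doobTransform_apply (κ : Kernel X Y) {F : Y → ℝ≥0∞} (hF : Measurable F) (x : X) :
    doobTransform κ hF x = boltzmannGibbs F (κ x) :=
  rfl

lemma boltzmannGibbs_bind {κ : Kernel X Y} {F : Y → ℝ≥0∞} (hF : Measurable F)
    (h0 : ∀ x, ∫⁻ y, F y ∂κ x ≠ 0) (htop : ∀ x, ∫⁻ y, F y ∂κ x ≠ ∞) (μ : Measure X) :
    boltzmannGibbs F (μ.bind κ) =
      (boltzmannGibbs (fun x ↦ ∫⁻ y, F y ∂κ x) μ).bind (doobTransform κ hF) := by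
  ext A hA
  have hcancel (x : X) : (∫⁻ y, F y ∂κ x) * boltzmannGibbs F (κ x) A = ∫⁻ y in A, F y ∂κ x := by
    rw [boltzmannGibbs_apply F _ hA, ENNReal.mul_inv_cancel_left (h0 x) (htop x)]
  have hbind : ∫⁻ y in A, F y ∂μ.bind κ = ∫⁻ x, ∫⁻ y in A, F y ∂κ x ∂μ := by
    simp only [← lintegral_indicator hA]
    exact Measure.lintegral_bind κ.aemeasurable (hF.indicator hA).aemeasurable
  rw [boltzmannGibbs_apply F _ hA, Measure.lintegral_bind κ.aemeasurable hF.aemeasurable, hbind,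
    Measure.bind_apply hA (Kernel.aemeasurable _),
    lintegral_boltzmannGibbs hF.lintegral_kernel (Kernel.measurable_coe _ hA)]
  simp only [doobTransform_apply, hcancel]

end BoltzmannGibbs

section Mixing

/-- Measurable potentials bounded above and bounded away from `0`. Mixing kernels preserve this
class, and a finite nonzero measure gives its members a finite nonzero integral. -/
structure IsBoundedPositive (F : X → ℝ≥0∞) : Prop where
  measurable : Measurable F
  exists_lower_bound : ∃ c ≠ 0, ∀ x, c ≤ F x
  exists_upper_bound : ∃ C ≠ ∞, ∀ x, F x ≤ C

namespace IsBoundedPositive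

variable {F : X → ℝ≥0∞}

lemma one : IsBoundedPositive (fun _ : X ↦ 1) :=
  ⟨measurable_const, ⟨1, one_ne_zero, fun _ ↦ le_rfl⟩, ⟨1, ENNReal.one_ne_top, fun _ ↦ le_rfl⟩⟩

lemma ne_zero (hF : IsBoundedPositive F) (x : X) : F x ≠ 0 := by
  obtain ⟨c, hc, hcF⟩ := hF.exists_lower_bound
  exact ne_bot_of_le_ne_bot hc (hcF x)

lemma ne_top (hF : IsBoundedPositive F) (x : X) : F x ≠ ∞ := by
  obtain ⟨C, hC, hFC⟩ := hF.exists_upper_bound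
  exact ne_top_of_le_ne_top hC (hFC x)

lemma lintegral_ne_zero (hF : IsBoundedPositive F) (μ : Measure X) [NeZero μ] :
    ∫⁻ x, F x ∂μ ≠ 0 := by
  obtain ⟨c, hc, hcF⟩ := hF.exists_lower_bound
  have hpos : c * μ Set.univ ≠ 0 := mul_ne_zero hc (NeZero.ne _)
  exact ne_bot_of_le_ne_bot hpos ((lintegral_const c).symm.trans_le (lintegral_mono hcF))

lemma lintegral_ne_top (hF : IsBoundedPositive F) (μ : Measure X) [IsFiniteMeasure μ] :
    ∫⁻ x, F x ∂μ ≠ ∞ := by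
  obtain ⟨C, hC, hFC⟩ := hF.exists_upper_bound
  exact ne_top_of_le_ne_top (ENNReal.mul_ne_top hC (measure_ne_top μ _))
    ((lintegral_mono hFC).trans_eq (lintegral_const C))

lemma isProbabilityMeasure_boltzmannGibbs (hF : IsBoundedPositive F) (μ : Measure X)
    [IsFiniteMeasure μ] [NeZero μ] : IsProbabilityMeasure (boltzmannGibbs F μ) :=
  _root_.isProbabilityMeasure_boltzmannGibbs (hF.lintegral_ne_zero μ) (hF.lintegral_ne_top μ)

end IsBoundedPositive

/-- The kernel `κ` is `ε`-mixing: `ε' λ ≤ κ(x, ·) ≤ λ / ε''` for some nonzero finite measure `λ` and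
positive constants with `ε' ε'' = ε²`. Neither `ε < 1` nor `0 < ε` is imposed. -/
def IsMixing (κ : Kernel X Y) (ε : ℝ) : Prop :=
  ∃ (lam : Measure Y) (ε' ε'' : ℝ), IsFiniteMeasure lam ∧ lam ≠ 0 ∧ 0 < ε' ∧ 0 < ε'' ∧
    ε' * ε'' = ε ^ 2 ∧
    ∀ x, ENNReal.ofReal ε' • lam ≤ κ x ∧ κ x ≤ ENNReal.ofReal (1 / ε'') • lam

namespace IsMixing

variable {κ : Kernel X Y} {ε : ℝ} {F : Y → ℝ≥0∞}

lemma isBoundedPositive_lintegral (hκ : IsMixing κ ε) (hF : IsBoundedPositive F) :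
    IsBoundedPositive fun x ↦ ∫⁻ y, F y ∂κ x := by
  obtain ⟨lam, ε', ε'', _, hlam, hε', -, -, hmix⟩ := hκ
  have : NeZero lam := ⟨hlam⟩
  refine ⟨hF.measurable.lintegral_kernel,
    ⟨ENNReal.ofReal ε' * ∫⁻ y, F y ∂lam, ?_, fun x ↦ ?_⟩,
    ⟨ENNReal.ofReal (1 / ε'') * ∫⁻ y, F y ∂lam, ?_, fun x ↦ ?_⟩⟩
  · exact mul_ne_zero (ENNReal.ofReal_pos.2 hε').ne' (hF.lintegral_ne_zero lam)
  · simpa using lintegral_mono' (hmix x).1 (le_refl F)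
  · exact ENNReal.mul_ne_top ENNReal.ofReal_ne_top (hF.lintegral_ne_top lam)
  · simpa using lintegral_mono' (hmix x).2 (le_refl F)

lemma isMarkovKernel_doobTransform (hκ : IsMixing κ ε) (hF : IsBoundedPositive F) :
    IsMarkovKernel (doobTransform κ hF.measurable) := by
  have hG := hκ.isBoundedPositive_lintegral hF
  exact ⟨fun x ↦ isProbabilityMeasure_boltzmannGibbs (hG.ne_zero x) (hG.ne_top x)⟩

lemma exists_minorization_doobTransform (hκ : IsMixing κ ε) (hF : IsBoundedPositive F) :
    ∃ π : Measure Y, IsProbabilityMeasure π ∧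
      ∀ x, ENNReal.ofReal (ε ^ 2) • π ≤ doobTransform κ hF.measurable x := by
  obtain ⟨lam, ε', ε'', _, hlam, hε', hε'', hε, hmix⟩ := hκ
  have : NeZero lam := ⟨hlam⟩
  have hratio : ENNReal.ofReal ε' / ENNReal.ofReal (1 / ε'') = ENNReal.ofReal (ε ^ 2) := by
    rw [← ENNReal.ofReal_div_of_pos (by positivity), div_div_eq_mul_div, div_one, hε]
  refine ⟨boltzmannGibbs F lam, hF.isProbabilityMeasure_boltzmannGibbs lam, fun x ↦ ?_⟩
  rw [← hratio, doobTransform_apply]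
  exact smul_boltzmannGibbs_le (by simpa using hε'') ENNReal.ofReal_ne_top (hmix x).1 (hmix x).2

lemma sq_le_one [Nonempty X] (hκ : IsMixing κ ε) : ε ^ 2 ≤ 1 := by
  have hone : IsBoundedPositive fun _ : Y ↦ 1 := .one
  have := hκ.isMarkovKernel_doobTransform hone
  obtain ⟨π, _, hπ⟩ := hκ.exists_minorization_doobTransform hone
  obtain ⟨x⟩ := ‹Nonempty X›
  simpa using hπ x Set.univ

lemma tvDist_boltzmannGibbs_bind_le (hκ : IsMixing κ ε) (hF : IsBoundedPositive F)
    {μ ν : Measure X} [IsProbabilityMeasure (boltzmannGibbs (fun x ↦ ∫⁻ y, F y ∂κ x) μ)]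
    [IsProbabilityMeasure (boltzmannGibbs (fun x ↦ ∫⁻ y, F y ∂κ x) ν)] :
    tvDist (boltzmannGibbs F (μ.bind κ)) (boltzmannGibbs F (ν.bind κ)) ≤
      (1 - ε ^ 2) * tvDist (boltzmannGibbs (fun x ↦ ∫⁻ y, F y ∂κ x) μ)
        (boltzmannGibbs (fun x ↦ ∫⁻ y, F y ∂κ x) ν) := by
  have hG := hκ.isBoundedPositive_lintegral hF
  have := hκ.isMarkovKernel_doobTransform hF
  obtain ⟨π, _, hπ⟩ := hκ.exists_minorization_doobTransform hF
  rw [boltzmannGibbs_bind hF.measurable hG.ne_zero hG.ne_top,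
    boltzmannGibbs_bind hF.measurable hG.ne_zero hG.ne_top,
    ← ENNReal.toReal_ofReal (sq_nonneg ε)]
  exact tvDist_bind_le_of_minorization hπ

end IsMixing

end Mixing

end Kernels

section Chain

variable {E : ℕ → Type*} [∀ k, MeasurableSpace (E k)] {S : ∀ k, Kernel (E k) (E (k + 1))} {n : ℕ}

lemma lintegral_compChain_zero {F : E 0 → ℝ≥0∞} (hF : Measurable F) (x : E 0) :
    ∫⁻ y, F y ∂compChain S 0 x = F x :=
  Kernel.lintegral_id' hF x

lemma lintegral_compChain_succ {F : E (n + 1) → ℝ≥0∞} (hF : Measurable F) (x : E 0) :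
    ∫⁻ y, F y ∂compChain S (n + 1) x = ∫⁻ z, ∫⁻ y, F y ∂S n z ∂compChain S n x :=
  Kernel.lintegral_comp _ _ _ hF

lemma bind_compChain_zero (η : Measure (E 0)) : η.bind (compChain S 0) = η :=
  Measure.id_comp

lemma bind_compChain_succ (η : Measure (E 0)) :
    η.bind (compChain S (n + 1)) = (η.bind (compChain S n)).bind (S n) :=
  Measure.comp_assoc.symm

variable {ε : ℕ → ℝ} {F : E n → ℝ≥0∞}

lemma isBoundedPositive_lintegral_compChain (hS : ∀ k < n, IsMixing (S k) (ε k))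
    (hF : IsBoundedPositive F) : IsBoundedPositive fun x ↦ ∫⁻ y, F y ∂compChain S n x := by
  induction n with
  | zero => simpa only [lintegral_compChain_zero hF.measurable] using hF
  | succ n ih =>
    simp only [lintegral_compChain_succ hF.measurable]
    exact ih (fun k hk ↦ hS k (hk.trans n.lt_succ_self))
      ((hS n n.lt_succ_self).isBoundedPositive_lintegral hF)

lemma isProbabilityMeasure_boltzmannGibbs_bind_compChain (hS : ∀ k < n, IsMixing (S k) (ε k))
    (hF : IsBoundedPositive F) (η : Measure (E 0)) [IsFiniteMeasure η] [NeZero η] :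
    IsProbabilityMeasure (boltzmannGibbs F (η.bind (compChain S n))) := by
  have hG := isBoundedPositive_lintegral_compChain hS hF
  have hbind := Measure.lintegral_bind (m := η) (compChain S n).aemeasurable
    hF.measurable.aemeasurable
  exact isProbabilityMeasure_boltzmannGibbs (hbind ▸ hG.lintegral_ne_zero η)
    (hbind ▸ hG.lintegral_ne_top η)

/-- A general final potential `F` is needed for the induction: removing the last kernel turns `F`
into `x ↦ ∫ F dS_n(x, ·)`. -/
lemma tvDist_boltzmannGibbs_bind_compChain_le (hS : ∀ k < n, IsMixing (S k) (ε k))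
    (hF : IsBoundedPositive F) (η η' : Measure (E 0))
    [IsFiniteMeasure η] [NeZero η] [IsFiniteMeasure η'] [NeZero η'] :
    tvDist (boltzmannGibbs F (η.bind (compChain S n)))
        (boltzmannGibbs F (η'.bind (compChain S n))) ≤
      (∏ k ∈ Finset.range n, (1 - ε k ^ 2)) *
        tvDist (boltzmannGibbs (fun x ↦ ∫⁻ y, F y ∂compChain S n x) η)
          (boltzmannGibbs (fun x ↦ ∫⁻ y, F y ∂compChain S n x) η') := by
  induction n with
  | zero => simp [lintegral_compChain_zero hF.measurable, bind_compChain_zero]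
  | succ n ih =>
    have hSn : IsMixing (S n) (ε n) := hS n n.lt_succ_self
    have hS' : ∀ k < n, IsMixing (S k) (ε k) := fun k hk ↦ hS k (hk.trans n.lt_succ_self)
    have hG := hSn.isBoundedPositive_lintegral hF
    have hprob := isProbabilityMeasure_boltzmannGibbs_bind_compChain hS' hG η
    have hprob' := isProbabilityMeasure_boltzmannGibbs_bind_compChain hS' hG η'
    have : Nonempty (E n) := nonempty_of_isProbabilityMeasure
      (boltzmannGibbs (fun x ↦ ∫⁻ y, F y ∂S n x) (η.bind (compChain S n)))
    simp only [bind_compChain_succ, lintegral_compChain_succ hF.measurable]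
    rw [Finset.prod_range_succ_comm, mul_assoc]
    exact (hSn.tvDist_boltzmannGibbs_bind_le hF).trans
      (mul_le_mul_of_nonneg_left (ih hS' hG) (sub_nonneg.2 hSn.sq_le_one))

end Chain

theorem feynman_kac_stability_general {E : ℕ → Type*} [∀ k, MeasurableSpace (E k)] {n : ℕ}
    {S : ∀ k, Kernel (E k) (E (k + 1))} {ε : ℕ → ℝ} (hS : ∀ k < n, IsMixing (S k) (ε k))
    (η η' : Measure (E 0)) [IsFiniteMeasure η] [NeZero η] [IsFiniteMeasure η'] [NeZero η'] :
    tvDist (normalizeMeasure (η.bind (compChain S n)))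
        (normalizeMeasure (η'.bind (compChain S n))) ≤
      (∏ k ∈ Finset.range n, (1 - ε k ^ 2)) *
        tvDist (bullet (fun x ↦ (compChain S n x Set.univ).toReal) η)
          (bullet (fun x ↦ (compChain S n x Set.univ).toReal) η') := by
  have hmass : IsBoundedPositive fun x ↦ compChain S n x Set.univ := by
    simpa only [lintegral_one] using isBoundedPositive_lintegral_compChain hS .one
  rw [bullet_toReal_eq_boltzmannGibbs hmass.measurable.aemeasurable (hmass.lintegral_ne_top η),
    bullet_toReal_eq_boltzmannGibbs hmass.measurable.aemeasurable (hmass.lintegral_ne_top η')]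
  simpa only [boltzmannGibbs_one, lintegral_one] using
    tvDist_boltzmannGibbs_bind_compChain_le hS .one η η'

/-- Stability of normalized Feynman–Kac flows built from mixing kernels
(kernels and potentials are indexed from `0` here, so `Q k`, `Ψ k`, `S k`,
`ε k`, `lam k` play the roles of `𝔔_{k+1}`, `Ψ_{k+1}`, `𝔖_{k+1}`, `ε_{k+1}`,
`λ_{k+1}` in the paper). -/
theorem feynman_kac_stability
    {E : ℕ → Type*} [∀ k, MeasurableSpace (E k)] (n : ℕ) (hn : 1 ≤ n)
    (Q : ∀ k, Kernel (E k) (E (k + 1))) (hQ : ∀ k, IsMarkovKernel (Q k))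
    (Ψ : ∀ k, E (k + 1) → ℝ)
    (hΨmeas : ∀ k, Measurable (Ψ k)) (hΨnonneg : ∀ k x, 0 ≤ Ψ k x)
    (hΨbdd : ∀ k, ∃ C : ℝ, ∀ x, Ψ k x ≤ C)
    (S : ∀ k, Kernel (E k) (E (k + 1)))
    (hS : ∀ k x, S k x = (Q k x).withDensity fun x' => ENNReal.ofReal (Ψ k x'))
    (ε ε' ε'' : ℕ → ℝ) (lam : ∀ k, Measure (E (k + 1)))
    (hlamfin : ∀ k, IsFiniteMeasure (lam k)) (hlamne : ∀ k < n, lam k ≠ 0)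
    (hε : ∀ k < n, ε k ∈ Set.Ioo (0 : ℝ) 1)
    (hε' : ∀ k < n, 0 < ε' k) (hε'' : ∀ k < n, 0 < ε'' k)
    (hεsq : ∀ k < n, ε' k * ε'' k = ε k ^ 2)
    (hmix : ∀ k < n, ∀ x, ∀ A : Set (E (k + 1)), MeasurableSet A →
      ENNReal.ofReal (ε' k) * lam k A ≤ S k x A ∧
        S k x A ≤ ENNReal.ofReal (1 / ε'' k) * lam k A)
    (η₀ η₀' : Measure (E 0)) (hη₀ : IsProbabilityMeasure η₀)
    (hη₀' : IsProbabilityMeasure η₀') :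
    tvDist (normalizeMeasure (η₀.bind (compChain S n)))
        (normalizeMeasure (η₀'.bind (compChain S n))) ≤
      (∏ k ∈ Finset.range n, (1 - ε k ^ 2)) *
        tvDist (bullet (fun x => (compChain S n x Set.univ).toReal) η₀)
          (bullet (fun x => (compChain S n x Set.univ).toReal) η₀') :=
  feynman_kac_stability_general (fun k hk ↦
    ⟨lam k, ε' k, ε'' k, hlamfin k, hlamne k hk, hε' k hk, hε'' k hk, hεsq k hk, fun x ↦
      ⟨Measure.le_iff.2 fun A hA ↦ (hmix k hk x A hA).1,
        Measure.le_iff.2 fun A hA ↦ (hmix k hk x A hA).2⟩⟩) η₀ η₀'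
end
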